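/- arXiv:2001.00805 — 8 statements merged into one kernel-verified Lean document; each statement's English description precedes it below -/
import Mathlib

section
/- Let Ω be a nonempty finite type with a probability mass function μ, A a nonempty finite type, Q : A → Ω → ℝ, and O : Ω → A an optimal-action selector (Q (O ω) ω = max_{a} Q a ω for every ω). Let β > 0 and let K : A → ℝ satisfy exp(β·K a) ≥ Σ_ω μ(ω)·exp(β·Q a ω) for every a ∈ A (the K-values upper-bound the cumulant generating functions of the posterior optimal Q-values). Then β⁻¹·log(Σ_a exp(β·K a)) ≥ Σ_ω μ(ω)·(max_a Q a ω) + β⁻¹·KL(p_O ‖ π_{βK}), i.e. the K-learning value function exceeds the expected optimal value by at least β⁻¹ times the KL divergence from the true probability of optimality to the K-learning Boltzmann policy. (Theorem 1, finite single-state form.) -/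
open Finset Real Classical

noncomputable section

/-- **Theorem 1 (finite single-state form).** The K-learning value function
`β⁻¹ log Σₐ exp(β Kₐ)` exceeds the expected optimal value by at least `β⁻¹`
times the KL divergence from the true probability of optimality to the
K-learning Boltzmann policy. -/
theorem klearning_value_kl_bound
    {Ω A : Type*} [Fintype Ω] [Nonempty Ω] [Fintype A] [Nonempty A]
    (μ : Ω → ℝ) (hμ0 : ∀ ω, 0 ≤ μ ω) (hμ1 : ∑ ω, μ ω = 1)
    (Q : A → Ω → ℝ) (O : Ω → A)
    (hO : ∀ ω, Q (O ω) ω = Finset.univ.sup' Finset.univ_nonempty (fun a => Q a ω))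
    (β : ℝ) (hβ : 0 < β) (K : A → ℝ)
    (hK : ∀ a, Real.exp (β * K a) ≥ ∑ ω, μ ω * Real.exp (β * Q a ω))
    (pO : A → ℝ)
    (hpO : ∀ a, pO a = ∑ ω ∈ Finset.univ.filter (fun ω => O ω = a), μ ω)
    (piK : A → ℝ)
    (hπ : ∀ a, piK a = Real.exp (β * K a) / ∑ b, Real.exp (β * K b))
    (KL : ℝ)
    (hKL : KL = ∑ a ∈ Finset.univ.filter (fun a => 0 < pO a),
      pO a * Real.log (pO a / piK a)) :
    β⁻¹ * Real.log (∑ a, Real.exp (β * K a)) ≥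
      (∑ ω, μ ω * Finset.univ.sup' Finset.univ_nonempty (fun a => Q a ω))
        + β⁻¹ * KL := by
  set Z := ∑ b, Real.exp (β * K b) with hZ
  have hZpos : 0 < Z := Finset.sum_pos (fun b _ => Real.exp_pos _) Finset.univ_nonempty
  have hp0 : ∀ a, 0 ≤ pO a := fun a => by
    rw [hpO]; exact Finset.sum_nonneg (fun ω _ => hμ0 ω)
  have hKL2 : KL = ∑ a, pO a * Real.log (pO a / piK a) := by
    rw [hKL]
    apply Finset.sum_filter_of_ne
    intro a _ h
    exact lt_of_le_of_ne (hp0 a) (fun h0 => h (by rw [← h0]; simp))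
  have hpsum : ∑ a, pO a = 1 := by
    simp_rw [hpO]
    rw [← hμ1]
    exact Finset.sum_fiberwise _ _ _
  have key : ∀ a, β * (∑ ω ∈ Finset.univ.filter (fun ω => O ω = a), μ ω * Q (O ω) ω)
      + pO a * Real.log (pO a / piK a) ≤ pO a * Real.log Z := by
    intro a
    rcases (hp0 a).eq_or_lt with h0 | hpos
    · have hz : ∀ ω ∈ Finset.univ.filter (fun ω => O ω = a), μ ω = 0 :=
        (Finset.sum_eq_zero_iff_of_nonneg (fun ω _ => hμ0 ω)).1 (by rw [← hpO, ← h0])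
      rw [Finset.sum_eq_zero (fun ω hω => by rw [hz ω hω, zero_mul]), ← h0]
      simp
    · have hlog : Real.log (pO a / piK a)
          = Real.log (pO a) - (β * K a - Real.log Z) := by
        rw [hπ, Real.log_div hpos.ne' (by positivity),
          Real.log_div (Real.exp_pos _).ne' hZpos.ne', Real.log_exp]
      rw [hlog]
      have h1 : ∑ ω ∈ Finset.univ.filter (fun ω => O ω = a),
          μ ω * (β * Q (O ω) ω - (β * K a - Real.log (pO a)) + 1) ≤ pO a := by
        calc _ ≤ ∑ ω ∈ Finset.univ.filter (fun ω => O ω = a),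
              (μ ω * Real.exp (β * Q a ω)) * (pO a / Real.exp (β * K a)) := by
              apply Finset.sum_le_sum
              intro ω hω
              rw [(Finset.mem_filter.1 hω).2, mul_assoc]
              apply mul_le_mul_of_nonneg_left _ (hμ0 ω)
              refine (Real.add_one_le_exp _).trans_eq ?_
              rw [Real.exp_sub, Real.exp_sub, Real.exp_log hpos]
              field_simp
          _ = (∑ ω ∈ Finset.univ.filter (fun ω => O ω = a),
              μ ω * Real.exp (β * Q a ω)) * (pO a / Real.exp (β * K a)) := by
              rw [Finset.sum_mul]
          _ ≤ Real.exp (β * K a) * (pO a / Real.exp (β * K a)) := by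
              apply mul_le_mul_of_nonneg_right _ (by positivity)
              refine le_trans ?_ (hK a)
              exact Finset.sum_le_sum_of_subset_of_nonneg (Finset.filter_subset _ _)
                (fun ω _ _ => mul_nonneg (hμ0 ω) (Real.exp_pos _).le)
          _ = pO a := by field_simp
      have h2 : ∑ ω ∈ Finset.univ.filter (fun ω => O ω = a),
          μ ω * (β * Q (O ω) ω - (β * K a - Real.log (pO a)) + 1)
          = β * (∑ ω ∈ Finset.univ.filter (fun ω => O ω = a), μ ω * Q (O ω) ω)
            + pO a * (1 - (β * K a - Real.log (pO a))) := by
        rw [hpO a, Finset.mul_sum, Finset.sum_mul, ← Finset.sum_add_distrib]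
        exact Finset.sum_congr rfl (fun ω _ => by ring)
      rw [h2] at h1
      linarith
  have hsum := Finset.sum_le_sum (fun a (_ : a ∈ Finset.univ) => key a)
  rw [Finset.sum_add_distrib, ← Finset.mul_sum, ← Finset.sum_mul, hpsum, ← hKL2,
    Finset.sum_fiberwise Finset.univ O (fun ω => μ ω * Q (O ω) ω), one_mul] at hsum
  simp_rw [← hO]
  have h3 := mul_le_mul_of_nonneg_left hsum (inv_pos.2 hβ).le
  rw [mul_add, inv_mul_cancel_left₀ hβ.ne'] at h3
  exact h3
end
end

section
/- Let Ω be a nonempty finite type with a probability mass function μ, A a nonempty finite type, Q : A → Ω → ℝ, β > 0, and K : A → ℝ with exp(β·K a) ≥ Σ_ω μ(ω)·exp(β·Q a ω) for every a ∈ A. Then β⁻¹·log(Σ_a exp(β·K a)) ≥ Σ_ω μ(ω)·(max_a Q a ω); that is, the K-learning value function is optimistic for the expected optimal value. -/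
open Finset Real Classical

noncomputable section

/-- The K-learning value function is optimistic for the expected optimal value:
if `exp(β Kₐ)` upper-bounds the moment generating function of the posterior
optimal Q-value of every action `a`, then `β⁻¹ log Σₐ exp(β Kₐ)` upper-bounds
the posterior expectation of the optimal value. -/
theorem klearning_value_optimistic
    {Ω A : Type*} [Fintype Ω] [Nonempty Ω] [Fintype A] [Nonempty A]
    (μ : Ω → ℝ) (hμ0 : ∀ ω, 0 ≤ μ ω) (hμ1 : ∑ ω, μ ω = 1)
    (Q : A → Ω → ℝ)
    (β : ℝ) (hβ : 0 < β) (K : A → ℝ)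
    (hK : ∀ a, Real.exp (β * K a) ≥ ∑ ω, μ ω * Real.exp (β * Q a ω)) :
    β⁻¹ * Real.log (∑ a, Real.exp (β * K a)) ≥
      ∑ ω, μ ω * Finset.univ.sup' Finset.univ_nonempty (fun a => Q a ω) := by
  set M : Ω → ℝ := fun ω => Finset.univ.sup' Finset.univ_nonempty (fun a => Q a ω) with hM
  have hJ : Real.exp (∑ ω, μ ω * (β * M ω)) ≤ ∑ ω, μ ω * Real.exp (β * M ω) := by
    have h := convexOn_exp.map_sum_le (t := Finset.univ) (w := μ) (p := fun ω => β * M ω)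
      (fun i _ => hμ0 i) hμ1 (fun i _ => Set.mem_univ _)
    simpa only [smul_eq_mul] using h
  have hB : ∑ ω, μ ω * Real.exp (β * M ω) ≤ ∑ a, Real.exp (β * K a) := by
    calc ∑ ω, μ ω * Real.exp (β * M ω)
        ≤ ∑ ω, μ ω * ∑ a, Real.exp (β * Q a ω) := by
          refine Finset.sum_le_sum fun ω _ => mul_le_mul_of_nonneg_left ?_ (hμ0 ω)
          obtain ⟨a, ha, h⟩ := Finset.exists_mem_eq_sup' (Finset.univ_nonempty (α := A))
            (fun a => Q a ω)
          have h' : M ω = Q a ω := h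
          rw [h']
          exact Finset.single_le_sum (f := fun a => Real.exp (β * Q a ω))
            (fun i _ => (Real.exp_pos _).le) ha
      _ = ∑ a, ∑ ω, μ ω * Real.exp (β * Q a ω) := by
          simp only [Finset.mul_sum]
          exact Finset.sum_comm
      _ ≤ _ := Finset.sum_le_sum fun a _ => hK a
  have hL := Real.log_le_log (Real.exp_pos _) (hJ.trans hB)
  rw [Real.log_exp] at hL
  have hE : ∑ ω, μ ω * (β * M ω) = β * ∑ ω, μ ω * M ω := by
    rw [Finset.mul_sum]
    exact Finset.sum_congr rfl fun ω _ => by ring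
  rw [hE] at hL
  change ∑ ω, μ ω * M ω ≤ _
  rw [inv_mul_eq_div, le_div_iff₀ hβ]
  linarith
end
end

section
/- Let Ω be a nonempty finite type with a probability mass function μ, A a nonempty finite type, Q : A → Ω → ℝ, and O : Ω → A any function. Fix a ∈ A with p_O(a) = Σ_{ω : O ω = a} μ(ω) > 0, let β > 0, and suppose K_a ∈ ℝ satisfies exp(β·K_a) ≥ Σ_ω μ(ω)·exp(β·Q a ω). Then β·K_a ≥ log p_O(a) + β·E[Q a | O = a], where E[Q a | O = a] = (Σ_{ω : O ω = a} μ(ω)·Q a ω)/p_O(a). -/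
open Finset Real Classical

noncomputable section

/-- Key intermediate estimate in the proof of Theorem 1: a
cumulant-generating-function upper bound on a K-value implies it is optimistic
for the conditional expectation of the Q-value given optimality, with an
additive log-probability correction:
`β Kₐ ≥ log pₒ(a) + β E[Q a | O = a]`. -/
theorem kvalue_conditional_optimism
    {Ω A : Type*} [Fintype Ω] [Nonempty Ω] [Fintype A] [Nonempty A]
    (μ : Ω → ℝ) (hμ0 : ∀ ω, 0 ≤ μ ω) (hμ1 : ∑ ω, μ ω = 1)
    (Q : A → Ω → ℝ) (O : Ω → A) (a : A)
    (pOa : ℝ)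
    (hpOa : pOa = ∑ ω ∈ Finset.univ.filter (fun ω => O ω = a), μ ω)
    (hpos : 0 < pOa)
    (β : ℝ) (hβ : 0 < β) (Ka : ℝ)
    (hK : Real.exp (β * Ka) ≥ ∑ ω, μ ω * Real.exp (β * Q a ω)) :
    β * Ka ≥ Real.log pOa +
      β * ((∑ ω ∈ Finset.univ.filter (fun ω => O ω = a), μ ω * Q a ω) / pOa) := by
  have hJ := convexOn_exp.map_centerMass_le
    (t := Finset.univ.filter (fun ω => O ω = a)) (w := μ) (p := fun ω => β * Q a ω)
    (fun i _ => hμ0 i) (hpOa ▸ hpos) (fun i _ => Set.mem_univ _)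
  simp only [Finset.centerMass, ← hpOa, smul_eq_mul, Function.comp] at hJ
  have hE : pOa⁻¹ * ∑ ω ∈ Finset.univ.filter (fun ω => O ω = a), μ ω * (β * Q a ω)
      = β * ((∑ ω ∈ Finset.univ.filter (fun ω => O ω = a), μ ω * Q a ω) / pOa) := by
    have : ∑ ω ∈ Finset.univ.filter (fun ω => O ω = a), μ ω * (β * Q a ω)
        = β * ∑ ω ∈ Finset.univ.filter (fun ω => O ω = a), μ ω * Q a ω := by
      rw [Finset.mul_sum]
      exact Finset.sum_congr rfl fun i _ => by ring
    rw [this]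
    ring
  rw [hE] at hJ
  have hsub : ∑ ω ∈ Finset.univ.filter (fun ω => O ω = a), μ ω * Real.exp (β * Q a ω)
      ≤ ∑ ω, μ ω * Real.exp (β * Q a ω) :=
    Finset.sum_le_sum_of_subset_of_nonneg (Finset.filter_subset _ _)
      fun i _ _ => mul_nonneg (hμ0 i) (Real.exp_pos _).le
  rw [ge_iff_le, ← Real.exp_le_exp, Real.exp_add, Real.exp_log hpos]
  refine le_trans ?_ (hsub.trans hK)
  rw [inv_mul_eq_div, le_div_iff₀ hpos] at hJ
  rw [mul_comm pOa]
  exact hJ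
end
end

section
/- Fix an integer N ≥ 3 and a real ε ∈ (0,1). Define cumulant generating functions G_i : (0,∞) → ℝ for arms i = 1, …, N by G_1(β) = β, G_2(β) = log((exp(2β) + exp(−2β))/2), and G_i(β) = (1−ε)·β for 3 ≤ i ≤ N, and define the K-learning policy π_β(i) = exp(G_i(β)) / Σ_{j=1}^N exp(G_j(β)). Then: (i) β⁻¹·G_2(β) > 0 for every β > 0 (the cumulant generating function of arm 2 is strictly optimistic for its posterior mean 0); and (ii) π_β(2) → 1 as β → ∞ (K-learning converges to pulling arm 2 deterministically). -/
open Finset Real Classical Filter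

noncomputable section

/-- K-learning on the 'one unknown action' bandit (Problem 1): (i) the
cumulant generating function of arm 2 is strictly optimistic for its posterior
mean 0, i.e. `β⁻¹ G₂(β) > 0` for every `β > 0`; and (ii) the K-learning
Boltzmann policy concentrates on arm 2 as `β → ∞`, i.e. `π_β(2) → 1`. -/
theorem klearning_one_unknown_action
    (N : ℕ) (hN : 3 ≤ N) (ε : ℝ) (hε : ε ∈ Set.Ioo (0 : ℝ) 1)
    (G : ℕ → ℝ → ℝ)
    (hG1 : ∀ β, G 1 β = β)
    (hG2 : ∀ β, G 2 β = Real.log ((Real.exp (2 * β) + Real.exp (-(2 * β))) / 2))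
    (hGi : ∀ i, 3 ≤ i → i ≤ N → ∀ β, G i β = (1 - ε) * β)
    (piK : ℝ → ℕ → ℝ)
    (hpi : ∀ β i, piK β i =
      Real.exp (G i β) / ∑ j ∈ Finset.Icc 1 N, Real.exp (G j β)) :
    (∀ β > (0 : ℝ), β⁻¹ * G 2 β > 0) ∧
      Filter.Tendsto (fun β => piK β 2) Filter.atTop (nhds 1) := by
  have e2 : ∀ β, Real.exp (G 2 β) = (Real.exp (2 * β) + Real.exp (-(2 * β))) / 2 := by
    intro β
    rw [hG2, Real.exp_log (by positivity)]
  refine ⟨?_, ?_⟩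
  · intro β hβ
    have h1 : 1 < Real.exp (G 2 β) := by
      rw [e2, ← Real.cosh_eq]
      exact Real.one_lt_cosh.mpr (by positivity)
    have h2 : 0 < G 2 β := Real.one_lt_exp_iff.mp h1
    positivity
  · have key : ∀ j ∈ Finset.Icc 1 N, Filter.Tendsto
        (fun β => Real.exp (G j β) / Real.exp (G 2 β)) Filter.atTop
        (nhds (if j = 2 then (1 : ℝ) else 0)) := by
      intro j hj
      rw [Finset.mem_Icc] at hj
      by_cases h : j = 2
      · subst h
        simp
      · rw [if_neg h]
        have hle : ∀ β, 0 ≤ β → G j β ≤ β := by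
          intro β hβ
          by_cases h1 : j = 1
          · rw [h1, hG1]
          · rw [hGi j (by omega) hj.2]
            nlinarith [hε.1]
        have hlim : Filter.Tendsto (fun β : ℝ => 2 * Real.exp (-β)) Filter.atTop (nhds 0) := by
          simpa using Real.tendsto_exp_neg_atTop_nhds_zero.const_mul 2
        refine tendsto_of_tendsto_of_tendsto_of_le_of_le' tendsto_const_nhds hlim
          (Filter.Eventually.of_forall fun β => by positivity) ?_
        filter_upwards [Filter.eventually_ge_atTop 0] with β hβ
        rw [div_le_iff₀ (Real.exp_pos _), e2]
        have a : Real.exp (G j β) ≤ Real.exp β := Real.exp_le_exp.mpr (hle β hβ)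
        have b : Real.exp (-β) * Real.exp (2 * β) = Real.exp β := by
          rw [← Real.exp_add]; congr 1; ring
        have c : 0 < Real.exp (-β) * Real.exp (-(2 * β)) := by positivity
        nlinarith
    have hs := tendsto_finsetSum _ key
    have hv : (∑ j ∈ Finset.Icc 1 N, if j = 2 then (1 : ℝ) else 0) = 1 := by
      rw [Finset.sum_ite_eq' (Finset.Icc 1 N) 2 (fun _ => (1 : ℝ)), if_pos]
      rw [Finset.mem_Icc]; omega
    rw [hv] at hs
    have hi := hs.inv₀ one_ne_zero
    rw [inv_one] at hi
    refine hi.congr fun β => ?_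
    rw [hpi, ← Finset.sum_div, inv_div]
end
end

section
/- Fix an integer N ≥ 3, a real ε ∈ (0,1), and β ≥ 0. Define posterior mean rewards m_1 = 1, m_2 = 0, and m_i = 1 − ε for 3 ≤ i ≤ N, and the soft Q-learning (Boltzmann) policy π_β(i) = exp(β·m_i)/Σ_{j=1}^N exp(β·m_j). Then π_β(2) ≤ 1/N and π_β(2) ≤ exp(−β(1−ε))/(N−2): the probability that soft Q-learning selects the informative arm 2 is at most 1/N for every β ≥ 0, and decays exponentially in β. -/
open Finset Real Classical

noncomputable section

/-- Soft Q-learning ('RL as inference') on the 'one unknown action' bandit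
(Problem 1): the Boltzmann policy over posterior mean rewards selects the
informative arm 2 with probability at most `1/N` for every `β ≥ 0`, and this
probability decays exponentially in `β` as `exp(−β(1−ε))/(N−2)`. -/
theorem soft_q_one_unknown_action
    (N : ℕ) (hN : 3 ≤ N) (ε : ℝ) (hε : ε ∈ Set.Ioo (0 : ℝ) 1)
    (β : ℝ) (hβ : 0 ≤ β)
    (m : ℕ → ℝ)
    (hm1 : m 1 = 1) (hm2 : m 2 = 0)
    (hmi : ∀ i, 3 ≤ i → i ≤ N → m i = 1 - ε)
    (piB : ℕ → ℝ)
    (hpi : ∀ i, piB i =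
      Real.exp (β * m i) / ∑ j ∈ Finset.Icc 1 N, Real.exp (β * m j)) :
    piB 2 ≤ 1 / N ∧ piB 2 ≤ Real.exp (-(β * (1 - ε))) / (N - 2) := by
  have h3 : (3 : ℝ) ≤ N := by exact_mod_cast hN
  obtain ⟨h0, h1⟩ := hε
  have hS1 : (N : ℝ) ≤ ∑ j ∈ Finset.Icc 1 N, Real.exp (β * m j) := by
    have h : ∑ j ∈ Finset.Icc 1 N, (1 : ℝ) ≤ ∑ j ∈ Finset.Icc 1 N, Real.exp (β * m j) := by
      apply Finset.sum_le_sum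
      intro i hi
      rw [Finset.mem_Icc] at hi
      apply Real.one_le_exp
      apply mul_nonneg hβ
      by_cases hi1 : i = 1
      · rw [hi1, hm1]; norm_num
      · by_cases hi2 : i = 2
        · rw [hi2, hm2]
        · rw [hmi i (by omega) hi.2]; linarith
    simpa using h
  have hS2 : ((N : ℝ) - 2) * Real.exp (β * (1 - ε)) ≤
      ∑ j ∈ Finset.Icc 1 N, Real.exp (β * m j) := by
    have h : ∑ j ∈ Finset.Icc 3 N, Real.exp (β * m j) ≤
        ∑ j ∈ Finset.Icc 1 N, Real.exp (β * m j) := by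
      apply Finset.sum_le_sum_of_subset_of_nonneg
      · exact Finset.Icc_subset_Icc (by norm_num) le_rfl
      · intro i _ _
        exact (Real.exp_pos _).le
    have h' : ∑ j ∈ Finset.Icc 3 N, Real.exp (β * m j) =
        ∑ j ∈ Finset.Icc 3 N, Real.exp (β * (1 - ε)) := by
      apply Finset.sum_congr rfl
      intro i hi
      rw [Finset.mem_Icc] at hi
      rw [hmi i hi.1 hi.2]
    rw [h', Finset.sum_const, Nat.card_Icc, nsmul_eq_mul,
      show N + 1 - 3 = N - 2 by omega, Nat.cast_sub (by omega)] at h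
    exact_mod_cast h
  rw [hpi 2, hm2, mul_zero, Real.exp_zero]
  constructor
  · exact one_div_le_one_div_of_le (by linarith) hS1
  · have hp : 0 < ((N : ℝ) - 2) * Real.exp (β * (1 - ε)) :=
      mul_pos (by linarith) (Real.exp_pos _)
    refine (one_div_le_one_div_of_le hp hS2).trans (le_of_eq ?_)
    rw [Real.exp_neg, one_div, mul_inv, div_eq_mul_inv, mul_comm]
end
end

section
/- Fix an integer N ≥ 3, a real ε ∈ (0,1), and an integer L ≥ 3. In the 'one unknown action' bandit of Problem 1, every deterministic algorithm alg satisfies max( Regret(M⁺, alg, L), Regret(M⁻, alg, L) ) ≥ 3: no deterministic algorithm has worst-case regret below 3. -/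
open Finset Real Classical

noncomputable section

/-- The history produced by running deterministic algorithm `alg` (a map
from histories of (action, reward) pairs to actions) in the deterministic
bandit with reward function `r` for `n` episodes. -/
def run (alg : List (ℕ × ℝ) → ℕ) (r : ℕ → ℝ) : ℕ → List (ℕ × ℝ)
  | 0 => []
  | n + 1 => run alg r n ++ [(alg (run alg r n), r (alg (run alg r n)))]

/-- The regret of `alg` over `L` episodes in the environment with reward
function `r` and optimal per-episode value `V`. -/
def regret (alg : List (ℕ × ℝ) → ℕ) (r : ℕ → ℝ) (V : ℝ) (L : ℕ) : ℝ :=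
  ∑ ℓ ∈ Finset.range L, (V - r (alg (run alg r ℓ)))

/-- Rewards of environment `M⁺` of Problem 1. -/
def rplus (ε : ℝ) : ℕ → ℝ := fun a => if a = 1 then 1 else if a = 2 then 2 else 1 - ε

/-- Rewards of environment `M⁻` of Problem 1. -/
def rminus (ε : ℝ) : ℕ → ℝ := fun a => if a = 1 then 1 else if a = 2 then -2 else 1 - ε

/-- In Problem 1, for `L ≥ 3`, no deterministic algorithm taking actions in
`{1, …, N}` has worst-case regret over `{M⁺, M⁻}` below 3. -/
theorem minimax_regret_lower_bound
    (N : ℕ) (hN : 3 ≤ N) (ε : ℝ) (hε : ε ∈ Set.Ioo (0 : ℝ) 1)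
    (L : ℕ) (hL : 3 ≤ L)
    (alg : List (ℕ × ℝ) → ℕ) (halg : ∀ h, 1 ≤ alg h ∧ alg h ≤ N) :
    3 ≤ max (regret alg (rplus ε) 2 L) (regret alg (rminus ε) 1 L) := by
  obtain ⟨h0, h1⟩ := hε
  by_cases h : ∃ l ∈ Finset.range L, alg (run alg (rminus ε) l) = 2
  · obtain ⟨l, hl, h2⟩ := h
    apply le_max_of_le_right
    have hnn : ∀ i ∈ Finset.range L, 0 ≤ (1 : ℝ) - rminus ε (alg (run alg (rminus ε) i)) := by
      intro i _
      unfold rminus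
      split_ifs <;> linarith
    have hs := Finset.single_le_sum hnn hl
    have h3 : (1 : ℝ) - rminus ε (alg (run alg (rminus ε) l)) = 3 := by
      rw [h2]; norm_num [rminus]
    unfold regret
    linarith
  · push Not at h
    apply le_max_of_le_left
    have hr : ∀ n, n ≤ L → run alg (rplus ε) n = run alg (rminus ε) n := by
      intro n
      induction n with
      | zero => intro _; rfl
      | succ n ih =>
        intro hn
        have h2 := h n (Finset.mem_range.2 hn)
        have e : rplus ε (alg (run alg (rminus ε) n)) = rminus ε (alg (run alg (rminus ε) n)) := by
          simp [rplus, rminus, h2]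
        simp only [run]
        rw [ih (by omega), e]
    have hs : ∑ i ∈ Finset.range L, (1 : ℝ) ≤ regret alg (rplus ε) 2 L := by
      unfold regret
      apply Finset.sum_le_sum
      intro i hi
      have h2 := h i hi
      rw [hr i (Finset.mem_range.1 hi).le]
      simp only [rplus, h2, if_false]
      split_ifs <;> linarith
    have hL' : (3 : ℝ) ≤ L := by exact_mod_cast hL
    simp at hs
    linarith
end
end

section
/- Fix an integer N ≥ 3, a real ε ∈ (0,1), an integer L ≥ 1, and a prior probability p⁺ ∈ (0, 1] with p⁺·L > 3. In the 'one unknown action' bandit of Problem 1, define the Bayesian regret of an algorithm as BayesRegret(alg, L) = p⁺·Regret(M⁺, alg, L) + (1 − p⁺)·Regret(M⁻, alg, L). Then every deterministic algorithm satisfies BayesRegret(alg, L) ≥ 3·(1 − p⁺), and the deterministic algorithm that plays arm 2 in episode 1 and thereafter plays arm 2 if the observed reward was 2 and arm 1 if it was −2 achieves BayesRegret = 3·(1 − p⁺); hence this algorithm is Bayes-optimal among deterministic algorithms whenever p⁺·L > 3. -/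
open Finset Real Classical

noncomputable section

/-- The Bayesian regret of `alg` under the prior putting probability `p⁺`
on `M⁺` and `1 − p⁺` on `M⁻`. -/
def bayesRegret (pPlus ε : ℝ) (alg : List (ℕ × ℝ) → ℕ) (L : ℕ) : ℝ :=
  pPlus * regret alg (rplus ε) 2 L + (1 - pPlus) * regret alg (rminus ε) 1 L

/-- The algorithm that plays arm 2 in episode 1, and thereafter plays arm 2
in every episode if the first observed reward was 2 and arm 1 if it was −2. -/
def alg2 : List (ℕ × ℝ) → ℕ := fun h =>
  match h.head? with
  | none => 2
  | some (_, r) => if r = 2 then 2 else 1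

theorem aux_rplus_le (ε : ℝ) (h : 0 < ε) (a : ℕ) : rplus ε a ≤ 2 := by
  unfold rplus; split_ifs <;> linarith

theorem aux_rplus_le_one (ε : ℝ) (h : 0 < ε) (a : ℕ) (ha : a ≠ 2) : rplus ε a ≤ 1 := by
  unfold rplus; split_ifs <;> linarith

theorem aux_rminus_le (ε : ℝ) (h : 0 < ε) (a : ℕ) : rminus ε a ≤ 1 := by
  unfold rminus; split_ifs <;> linarith

theorem aux_eq (ε : ℝ) (a : ℕ) (ha : a ≠ 2) : rplus ε a = rminus ε a := by
  simp [rplus, rminus, ha]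

theorem aux_run_eq (ε : ℝ) (alg : List (ℕ × ℝ) → ℕ) (L : ℕ)
    (h : ∀ l < L, alg (run alg (rminus ε) l) ≠ 2) :
    ∀ n ≤ L, run alg (rplus ε) n = run alg (rminus ε) n := by
  intro n
  induction n with
  | zero => intro _; rfl
  | succ k ih =>
    intro hk
    have e := ih (by omega)
    simp only [run]
    rw [e, aux_eq ε _ (h k (by omega))]

theorem aux_head (r : ℕ → ℝ) (n : ℕ) : (run alg2 r (n + 1)).head? = some (2, r 2) := by
  induction n with
  | zero => simp [run, alg2]
  | succ k ih =>
    rw [run, List.head?_append, ih]; rfl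

theorem aux_alg2 (r : ℕ → ℝ) (n : ℕ) :
    alg2 (run alg2 r (n + 1)) = if r 2 = 2 then 2 else 1 := by
  have key : ∀ h : List (ℕ × ℝ), h.head? = some (2, r 2) →
      alg2 h = if r 2 = 2 then 2 else 1 := by
    intro h hh
    simp only [alg2, hh]
  exact key _ (aux_head r n)

/-- In Problem 1 with prior `(p⁺, 1 − p⁺)` and `p⁺ L > 3`, every deterministic
algorithm taking actions in `{1, …, N}` has Bayesian regret at least
`3 (1 − p⁺)`, and the probing algorithm `alg2` achieves exactly `3 (1 − p⁺)`;
hence `alg2` is Bayes-optimal among deterministic algorithms. -/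
theorem alg2_bayes_optimal
    (N : ℕ) (hN : 3 ≤ N) (ε : ℝ) (hε : ε ∈ Set.Ioo (0 : ℝ) 1)
    (L : ℕ) (hL : 1 ≤ L)
    (pPlus : ℝ) (hp : pPlus ∈ Set.Ioc (0 : ℝ) 1) (hpL : 3 < pPlus * L) :
    (∀ alg : List (ℕ × ℝ) → ℕ, (∀ h, 1 ≤ alg h ∧ alg h ≤ N) →
        3 * (1 - pPlus) ≤ bayesRegret pPlus ε alg L) ∧
      bayesRegret pPlus ε alg2 L = 3 * (1 - pPlus) := by
  obtain ⟨hε0, hε1⟩ := hε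
  obtain ⟨hp0, hp1⟩ := hp
  constructor
  · intro alg _
    have hplus : 0 ≤ regret alg (rplus ε) 2 L :=
      Finset.sum_nonneg fun l _ => by linarith [aux_rplus_le ε hε0 (alg (run alg (rplus ε) l))]
    have hnn : ∀ l ∈ Finset.range L, 0 ≤ 1 - rminus ε (alg (run alg (rminus ε) l)) :=
      fun l _ => by linarith [aux_rminus_le ε hε0 (alg (run alg (rminus ε) l))]
    have hminus : 0 ≤ regret alg (rminus ε) 1 L := Finset.sum_nonneg hnn
    unfold bayesRegret
    by_cases h : ∀ l < L, alg (run alg (rminus ε) l) ≠ 2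
    · have h1 : (L : ℝ) ≤ regret alg (rplus ε) 2 L := by
        have : ∑ l ∈ Finset.range L, (1 : ℝ) ≤ regret alg (rplus ε) 2 L := by
          refine Finset.sum_le_sum fun l hl => ?_
          have hl' := Finset.mem_range.mp hl
          rw [aux_run_eq ε alg L h l hl'.le]
          linarith [aux_rplus_le_one ε hε0 _ (h l hl')]
        simpa using this
      have := mul_le_mul_of_nonneg_left h1 hp0.le
      have := mul_nonneg (sub_nonneg.mpr hp1) hminus
      linarith
    · push Not at h
      obtain ⟨l, hl, h2⟩ := h
      have h3 : 3 ≤ regret alg (rminus ε) 1 L := by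
        have := Finset.single_le_sum hnn (Finset.mem_range.mpr hl)
        rw [h2] at this
        have e : rminus ε 2 = -2 := by simp [rminus]
        rw [e] at this
        unfold regret
        linarith
      have := mul_le_mul_of_nonneg_left h3 (sub_nonneg.mpr hp1)
      have := mul_nonneg hp0.le hplus
      linarith
  · obtain ⟨k, rfl⟩ : ∃ k, L = k + 1 := ⟨L - 1, by omega⟩
    have e1 : rplus ε 2 = 2 := by simp [rplus]
    have e2 : rminus ε 2 = -2 := by simp [rminus]
    have e3 : rminus ε 1 = 1 := by simp [rminus]
    have er : ∀ r, run alg2 r 0 = [] := fun _ => rfl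
    have e0 : alg2 [] = 2 := rfl
    have n2 : ¬ ((-2 : ℝ) = 2) := by norm_num
    unfold bayesRegret regret
    rw [Finset.sum_range_succ', Finset.sum_range_succ']
    simp only [aux_alg2, e1, e2, er, e0, if_true, if_neg n2, e3]
    simp
    ring
end
end

section
/- Let μ be the infinite product over ℕ of the Bernoulli(1/2) measure on Bool (the law of an i.i.d. sequence of fair coin flips), a probability measure on ℕ → Bool, and define the hitting time T(ω) = sInf { n : ω n = true }. For every integer L ≥ 1: (i) ∫ min(T, L) dμ = 1 − 2^{−L}; (ii) μ{ω : T(ω) < L} = 1 − 2^{−L}; and consequently (iii) (1/2)·∫ min(T, L) dμ + (1/2)·3·μ{T < L} = 2·(1 − 2^{−L}) ≤ 2. (This computes the Bayesian regret of Thompson sampling on Problem 1 with uniform prior: in M⁺ each episode before the first sample of M⁺ incurs regret 1, and in M⁻ the single play of arm 2, occurring iff M⁺ is sampled within L episodes, incurs regret 3; so the Bayesian regret after L episodes is 2(1 − 2^{−L}).) -/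
open Finset Real Classical MeasureTheory

noncomputable section

/-- Bayesian regret of Thompson sampling on Problem 1 with uniform prior.
`μ` is the law of an i.i.d. sequence of fair coin flips — the infinite
product over `ℕ` of the Bernoulli(1/2) measure on `Bool`, characterized by
its values on cylinder sets — and `T` is the hitting time of `true`.  Then
(i) `∫ min(T, L) dμ = 1 − 2⁻ᴸ`; (ii) `μ{T < L} = 1 − 2⁻ᴸ`; and consequently
(iii) `(1/2)·∫ min(T, L) dμ + (1/2)·3·μ{T < L} = 2(1 − 2⁻ᴸ) ≤ 2`. -/
theorem thompson_sampling_bayes_regret_problem1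
    (μ : Measure (ℕ → Bool)) [IsProbabilityMeasure μ]
    (hiid : ∀ (n : ℕ) (b : ℕ → Bool),
      μ {ω | ∀ i < n, ω i = b i} = (1 / 2 : ENNReal) ^ n)
    (T : (ℕ → Bool) → ℕ)
    (hT : ∀ ω, T ω = sInf {n | ω n = true})
    (L : ℕ) (hL : 1 ≤ L) :
    (∫ ω, (min (T ω) L : ℝ) ∂μ = 1 - (1 / 2 : ℝ) ^ L) ∧
      ((μ {ω | T ω < L}).toReal = 1 - (1 / 2 : ℝ) ^ L) ∧
      ((1 / 2) * (∫ ω, (min (T ω) L : ℝ) ∂μ)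
          + (1 / 2) * 3 * (μ {ω | T ω < L}).toReal
        = 2 * (1 - (1 / 2 : ℝ) ^ L) ∧
        2 * (1 - (1 / 2 : ℝ) ^ L) ≤ 2) := by
  have hA : ∀ n, μ {ω : ℕ → Bool | ∀ i < n, ω i = false} = (1 / 2 : ENNReal) ^ n :=
    fun n => hiid n (fun _ => false)
  have hM : ∀ n, MeasurableSet {ω : ℕ → Bool | ∀ i < n, ω i = false} := by
    intro n
    have : {ω : ℕ → Bool | ∀ i < n, ω i = false}
        = ⋂ i, ⋂ (_ : i < n), (fun ω : ℕ → Bool => ω i) ⁻¹' {false} := by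
      ext ω; simp
    rw [this]
    exact MeasurableSet.iInter fun i => MeasurableSet.iInter fun _ =>
      measurable_pi_apply i (measurableSet_singleton _)
  have hreal : ∀ n, μ.real {ω : ℕ → Bool | ∀ i < n, ω i = false} = (1 / 2 : ℝ) ^ n := by
    intro n
    rw [Measure.real, hA n]
    simp
  have hae : ∀ᵐ ω ∂μ, ∃ n, ω n = true := by
    rw [ae_iff]
    have hle : ∀ n : ℕ, μ {ω : ℕ → Bool | ¬ ∃ n, ω n = true} ≤ (1 / 2 : ENNReal) ^ n := by
      intro n
      rw [← hA n]
      apply measure_mono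
      intro ω hω i _
      simp only [Set.mem_setOf_eq, not_exists, Bool.not_eq_true] at hω
      exact hω i
    have ht : Filter.Tendsto (fun n : ℕ => (1 / 2 : ENNReal) ^ n) Filter.atTop (nhds 0) := by
      apply ENNReal.tendsto_pow_atTop_nhds_zero_of_lt_one
      simp
    exact le_antisymm (ge_of_tendsto' ht hle) zero_le
  have hlt : ∀ ω : ℕ → Bool, (∃ n, ω n = true) →
      ∀ k, (k ≤ T ω ↔ ∀ i < k, ω i = false) := by
    intro ω hω k
    rw [hT ω]
    constructor
    · intro h i hi
      have := Nat.notMem_of_lt_sInf (lt_of_lt_of_le hi h)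
      simpa using this
    · intro h
      by_contra hc
      have h1 := h _ (not_le.mp hc)
      have h2 : ω (sInf {n | ω n = true}) = true := Nat.sInf_mem (s := {n | ω n = true}) hω
      rw [h1] at h2
      exact absurd h2 (by simp)
  have h1 : ∫ ω, (min (T ω) L : ℝ) ∂μ = 1 - (1 / 2 : ℝ) ^ L := by
    have e : (fun ω => (min (T ω) L : ℝ)) =ᵐ[μ] fun ω => ∑ k ∈ Finset.range L,
        Set.indicator {ω : ℕ → Bool | ∀ i < k + 1, ω i = false} (fun _ => (1 : ℝ)) ω := by
      filter_upwards [hae] with ω hω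
      have : ∀ k, Set.indicator {ω : ℕ → Bool | ∀ i < k + 1, ω i = false}
          (fun _ => (1 : ℝ)) ω = if k < T ω then 1 else 0 := by
        intro k
        rw [Set.indicator_apply]
        congr 1
        exact propext (hlt ω hω (k + 1)).symm
      simp only [this]
      rw [Finset.sum_boole]
      have hf : (Finset.range L).filter (fun k => k < T ω) = Finset.range (min (T ω) L) := by
        ext k; simp; tauto
      rw [hf]
      simp
    rw [integral_congr_ae e, integral_finset_sum]
    · simp only [integral_indicator_const _ (hM _), hreal, smul_eq_mul, mul_one]
      clear hL e
      induction L with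
      | zero => simp
      | succ n ih => rw [Finset.sum_range_succ, ih]; ring
    · intro k _
      exact (integrable_const _).indicator (hM _)
  have h2 : (μ {ω | T ω < L}).toReal = 1 - (1 / 2 : ℝ) ^ L := by
    have : μ {ω | T ω < L} = μ {ω : ℕ → Bool | ∀ i < L, ω i = false}ᶜ := by
      apply measure_congr
      filter_upwards [hae] with ω hω
      apply propext
      change T ω < L ↔ ¬ (∀ i < L, ω i = false)
      rw [← hlt ω hω L, not_le]
    rw [this]
    change μ.real _ = _
    rw [probReal_compl_eq_one_sub (hM L), hreal]
  refine ⟨h1, h2, ?_, ?_⟩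
  · rw [h1, h2]; ring
  · have : (0 : ℝ) ≤ (1 / 2 : ℝ) ^ L := by positivity
    linarith
end
end
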